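/- Let P ⊆ ℝ^d be a rational polytope of dimension d. Then the lattice-point counting function L(P, r) = Card(rP ∩ ℤ^d) is a quasi-polynomial of r of degree d, and the coefficient of r^d in each of its constituent polynomials equals the Euclidean volume of P. -/

import Mathlib

open scoped Pointwise

/-!
Order the vertices `v i` of `P`. A point `x` of `r • P` is `∑ i, l i • v i` for nonnegative
coefficients `l` with sum `r`; take the lexicographically largest such `l`. Whether `l` is largest
depends only on its support, which has to be a face of the pulling triangulation of `P`, and adding
the first vertex `⊥` to a face gives a face. So the lattice points of `r • P` split into cells
indexed by the faces `W` containing `⊥`: the cell of `W` consists of the `l` with sum `r` satisfying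
`0 ≤ l ⊥`, `0 < l i` for the other `i ∈ W`, and `l i = 0` for `i ∉ W`.

Let `q` be a common denominator of the vertices. Adding `q` to a coordinate in `W` maps the lattice
points of the cell at height `r` to those at height `r + q`, so taking a difference with step `q`
leaves only the points for which that coordinate cannot be decreased by `q`. After one difference
for each `i ∈ W` all coordinates are at most `q` and `l ⊥ < q`, so that the sum is less than
`W.card * q`. But the height is now at least `W.card * q`: the iterated difference vanishes
identically, and Newton's forward difference formula makes the count a polynomial on each residue
class modulo `q`. Since the number of lattice points of `r • P` divided by `r ^ d` tends to the
volume of `P`, which is positive, each of these polynomials has degree `d` and the volume of `P` as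
its leading coefficient.
-/

open Filter MeasureTheory Set Topology

section QuasiPolynomial

open Polynomial

/-- `f : ℕ → R` is a quasi-polynomial of period `q`: on every residue class modulo `q` it agrees
with a polynomial. The polynomials are quantified separately for each class, so that no choice of
representatives enters the definition. -/
def IsQuasiPolynomial {R : Type*} [Semiring R] (q : ℕ) (f : ℕ → R) : Prop :=
  ∀ a, ∃ p : R[X], ∀ r, r ≡ a [MOD q] → f r = p.eval (r : R)

theorem isQuasiPolynomial_zero {R : Type*} [Semiring R] (q : ℕ) :
    IsQuasiPolynomial q fun _ => (0 : R) :=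
  fun _ => ⟨0, by simp⟩

theorem IsQuasiPolynomial.sum {R κ : Type*} [CommSemiring R] {q : ℕ} {s : Finset κ}
    {f : κ → ℕ → R} (hf : ∀ k ∈ s, IsQuasiPolynomial q (f k)) :
    IsQuasiPolynomial q fun r => ∑ k ∈ s, f k r := by
  intro a
  choose! p hp using fun k hk => hf k hk a
  refine ⟨∑ k ∈ s, p k, fun r hr => ?_⟩
  rw [eval_finsetSum]
  exact Finset.sum_congr rfl fun k hk => hp k hk r hr

theorem fwdDiff_iter_eq_zero_of_le {M G : Type*} [AddCommMonoid M] [AddCommGroup G] {h : M}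
    {f : M → G} {k j : ℕ} (hf : (fwdDiff h)^[k] f = 0) (hkj : k ≤ j) : (fwdDiff h)^[j] f = 0 := by
  rw [← fwdDiff_aux.coe_fwdDiffₗ_pow] at hf ⊢
  exact Module.End.pow_map_zero_of_le hkj hf

theorem exists_polynomial_of_fwdDiff_iter_eq_zero {M K : Type*} [AddCommMonoid M] [Field K]
    [CharZero K] {h : M} {f : M → K} {k : ℕ} (hf : (fwdDiff h)^[k] f = 0) (y : M) :
    ∃ p : K[X], ∀ n : ℕ, f (y + n • h) = p.eval (n : K) := by
  let c (j : ℕ) : K := (fwdDiff h)^[j] f y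
  refine ⟨∑ j ∈ Finset.range k, C (c j / j.factorial) * descPochhammer K j, fun n => ?_⟩
  calc f (y + n • h)
      = ∑ j ∈ Finset.range (n + 1), n.choose j • c j := shift_eq_sum_fwdDiff_iter h f n y
    _ = ∑ j ∈ Finset.range (n + 1 + k), n.choose j • c j :=
        (Finset.eventually_constant_sum
          (fun j hj => by rw [Nat.choose_eq_zero_of_lt hj, zero_smul]) (by lia)).symm
    _ = ∑ j ∈ Finset.range k, n.choose j • c j :=
        Finset.eventually_constant_sum
          (fun j hj => by simp [c, fwdDiff_iter_eq_zero_of_le hf hj]) (by lia)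
    _ = _ := by
        rw [eval_finsetSum]
        refine Finset.sum_congr rfl fun j _ => ?_
        rw [nsmul_eq_mul, Nat.cast_choose_eq_descPochhammer_div, eval_C_mul]
        ring

theorem isQuasiPolynomial_of_fwdDiff_iter_eq_zero {K : Type*} [Field K] [CharZero K] {q : ℕ}
    (hq : 0 < q) {f : ℕ → K} {k : ℕ} (hf : (fwdDiff q)^[k] f = 0) : IsQuasiPolynomial q f := by
  intro a
  obtain ⟨p, hp⟩ := exists_polynomial_of_fwdDiff_iter_eq_zero hf (a % q)
  refine ⟨p.comp (C (q : K)⁻¹ * (X - C ((a % q : ℕ) : K))), fun r hr => ?_⟩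
  have hr_eq : a % q + r / q * q = r := by
    rw [← show r % q = a % q from hr, mul_comm, Nat.mod_add_div]
  have hq' : (q : K) ≠ 0 := Nat.cast_ne_zero.mpr hq.ne'
  have hdiv : (q : K)⁻¹ * (r - (a % q : ℕ)) = (r / q : ℕ) := by
    rw [inv_mul_eq_iff_eq_mul₀ hq', sub_eq_iff_eq_add']
    exact_mod_cast (by rw [mul_comm q, hr_eq] : r = a % q + q * (r / q))
  rw [eval_comp, eval_C_mul, eval_sub, eval_X, eval_C, hdiv, ← hp, smul_eq_mul, hr_eq]

theorem natDegree_eq_and_coeff_eq_of_tendsto_eval_div_pow {α 𝕜 : Type*} [NormedField 𝕜]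
    [LinearOrder 𝕜] [IsStrictOrderedRing 𝕜] [OrderTopology 𝕜] {l : Filter α} [l.NeBot] {p : 𝕜[X]}
    {x : α → 𝕜} {d : ℕ} {c : 𝕜} (hc : c ≠ 0) (hx : Tendsto x l atTop)
    (hp : Tendsto (fun a => p.eval (x a) / x a ^ d) l (𝓝 c)) :
    p.natDegree = d ∧ p.coeff d = c := by
  replace hp : Tendsto (fun a => p.eval (x a) / (X ^ d : 𝕜[X]).eval (x a)) l (𝓝 c) := by
    simpa only [eval_pow, eval_X] using hp
  rcases lt_trichotomy p.degree (X ^ d : 𝕜[X]).degree with hlt | heq | hgt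
  · have hzero := (div_tendsto_atTop_zero_of_degree_lt p _ hlt).comp hx
    exact absurd (tendsto_nhds_unique hp hzero) hc
  · have hlead := (div_tendsto_atTop_leadingCoeff_div_of_degree_eq p _ heq).comp hx
    have hdeg : p.natDegree = d := by rw [natDegree_eq_natDegree heq, natDegree_X_pow]
    rw [leadingCoeff_X_pow, div_one, leadingCoeff, hdeg] at hlead
    exact ⟨hdeg, tendsto_nhds_unique hlead hp⟩
  · have hX : (X ^ d : 𝕜[X]) ≠ 0 := pow_ne_zero d X_ne_zero
    have htop := (abs_div_tendsto_atTop_atTop_of_degree_gt p _ hgt hX).comp hx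
    exact absurd hp.abs (not_tendsto_nhds_of_tendsto_atTop htop _)

theorem natDegree_eq_and_coeff_eq_of_eval_eq_of_modEq {q : ℕ} (hq : 0 < q) {f : ℕ → ℚ} {p : ℚ[X]}
    {a d : ℕ} {c : ℝ} (hp : ∀ r, r ≡ a [MOD q] → f r = p.eval (r : ℚ)) (hc : c ≠ 0)
    (hf : Tendsto (fun r : ℕ => (f r : ℝ) / (r : ℝ) ^ d) atTop (𝓝 c)) :
    p.natDegree = d ∧ (p.coeff d : ℝ) = c := by
  have hclass : (atTop ⊓ 𝓟 {r | r ≡ a [MOD q]}).NeBot :=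
    frequently_mem_iff_neBot.mp (Nat.frequently_modEq hq.ne' a)
  have heval (r : ℕ) (hr : r ≡ a [MOD q]) :
      (f r : ℝ) = (p.map (algebraMap ℚ ℝ)).eval (r : ℝ) := by
    rw [hp r hr, eval_natCast_map, eq_ratCast]
  have hlim : Tendsto (fun r : ℕ => (p.map (algebraMap ℚ ℝ)).eval (r : ℝ) / (r : ℝ) ^ d)
      (atTop ⊓ 𝓟 {r | r ≡ a [MOD q]}) (𝓝 c) := by
    refine (hf.mono_left inf_le_left).congr' ?_
    filter_upwards [mem_inf_of_right (mem_principal_self _)] with r hr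
    rw [heval r hr]
  simpa using natDegree_eq_and_coeff_eq_of_tendsto_eval_div_pow hc
    (tendsto_natCast_atTop_atTop.mono_left inf_le_left) hlim

end QuasiPolynomial

section TruncatedSlice

variable {ι R : Type*} [Fintype ι] [AddCommGroupWithOne R]

/-- The points of `Λ` in the box `∏ i, J i` with coordinate sum `r`, truncated in the directions
`i ∈ S`: those points are discarded that stay in the box when their `i`-th coordinate is decreased
by `q`. -/
def truncatedSlice (Λ : AddSubgroup (ι → R)) (J : ι → Set R) (q : ℕ) (S : Finset ι) (r : ℕ) :
    Set (ι → R) :=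
  {l | l ∈ Λ ∧ ∑ i, l i = r ∧ (∀ i, l i ∈ J i) ∧ ∀ i ∈ S, l i - q ∉ J i}

variable {Λ : AddSubgroup (ι → R)} {J : ι → Set R} {q : ℕ}

theorem truncatedSlice_anti {S T : Finset ι} (h : S ⊆ T) (r : ℕ) :
    truncatedSlice Λ J q T r ⊆ truncatedSlice Λ J q S r :=
  fun _ ⟨hΛ, hsum, hJ, hT⟩ => ⟨hΛ, hsum, hJ, fun i hi => hT i (h hi)⟩

variable [DecidableEq ι]

theorem add_single_mem_truncatedSlice_iff {S : Finset ι} {i : ι} {r : ℕ} {l : ι → R}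
    (hi : i ∉ S) (hΛ : Pi.single i (q : R) ∈ Λ) (hJ : ∀ x ∈ J i, x + q ∈ J i) :
    l + Pi.single i (q : R) ∈ truncatedSlice Λ J q S (r + q) ∩ {μ | μ i - q ∈ J i} ↔
      l ∈ truncatedSlice Λ J q S r := by
  set μ : ι → R := l + Pi.single i (q : R) with hμ
  have hself : μ i = l i + q := by simp [hμ]
  have hne (j : ι) (hj : j ≠ i) : μ j = l j := by simp [hμ, hj]
  have hsum : ∑ j, μ j = ∑ j, l j + q := by simp [hμ, Finset.sum_add_distrib]
  have hS : (∀ j ∈ S, μ j - q ∉ J j) ↔ ∀ j ∈ S, l j - q ∉ J j :=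
    forall₂_congr fun j hj => by rw [hne j (ne_of_mem_of_not_mem hj hi)]
  have hbox : ((∀ j, μ j ∈ J j) ∧ l i ∈ J i) ↔ ∀ j, l j ∈ J j := by
    refine ⟨fun h j => ?_, fun h => ⟨fun j => ?_, h i⟩⟩ <;> obtain rfl | hj := eq_or_ne j i
    · exact h.2
    · exact hne j hj ▸ h.1 j
    · exact hself ▸ hJ _ (h j)
    · exact (hne j hj).symm ▸ h j
  simp only [truncatedSlice, mem_inter_iff, mem_ofPred_eq, hμ ▸ Λ.add_mem_cancel_right hΛ, hsum, hS,
    Nat.cast_add, add_left_inj, ← hbox, hself, add_sub_cancel_right]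
  tauto

theorem ncard_truncatedSlice_add {S : Finset ι} {i : ι} {r : ℕ} (hi : i ∉ S)
    (hΛ : Pi.single i (q : R) ∈ Λ) (hJ : ∀ x ∈ J i, x + q ∈ J i)
    (hfin : (truncatedSlice Λ J q S (r + q)).Finite) :
    (truncatedSlice Λ J q S (r + q)).ncard =
      (truncatedSlice Λ J q (insert i S) (r + q)).ncard + (truncatedSlice Λ J q S r).ncard := by
  have himage : (· + Pi.single i (q : R)) '' truncatedSlice Λ J q S r =
      truncatedSlice Λ J q S (r + q) ∩ {l | l i - q ∈ J i} := by
    ext μ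
    simp only [← add_single_mem_truncatedSlice_iff hi hΛ hJ, image_add_right, mem_preimage,
      neg_add_cancel_right]
  have htruncated : truncatedSlice Λ J q (insert i S) (r + q) =
      truncatedSlice Λ J q S (r + q) \ {l | l i - q ∈ J i} := by
    ext l
    simp only [truncatedSlice, Finset.forall_mem_insert, Set.mem_sdiff, mem_ofPred_eq]
    tauto
  rw [← ncard_image_of_injective (truncatedSlice Λ J q S r)
    (add_left_injective (Pi.single i (q : R))), himage, htruncated, add_comm (ncard _),
    ncard_inter_add_ncard_sdiff_eq_ncard _ _ hfin]

theorem fwdDiff_iter_ncard_truncatedSlice {S : Finset ι}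
    (hΛ : ∀ i ∈ S, Pi.single i (q : R) ∈ Λ) (hJ : ∀ i ∈ S, ∀ x ∈ J i, x + q ∈ J i)
    (hfin : ∀ r, (truncatedSlice Λ J q ∅ r).Finite) (r : ℕ) :
    (fwdDiff q)^[S.card] (fun r => ((truncatedSlice Λ J q ∅ r).ncard : ℚ)) r =
      (truncatedSlice Λ J q S (r + S.card * q)).ncard := by
  induction S using Finset.induction_on generalizing r with
  | empty => simp
  | insert i S hi ih =>
    simp only [Finset.forall_mem_insert] at hΛ hJ
    have hstep := ncard_truncatedSlice_add (r := r + S.card * q) hi hΛ.1 hJ.1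
      ((hfin _).subset (truncatedSlice_anti S.empty_subset _))
    rw [Finset.card_insert_of_notMem hi, Function.iterate_succ_apply', fwdDiff, ih hΛ.2 hJ.2,
      ih hΛ.2 hJ.2, add_right_comm, hstep, add_mul, one_mul, ← add_assoc, Nat.cast_add,
      add_sub_cancel_right]

theorem isQuasiPolynomial_ncard_truncatedSlice (hq : 0 < q) {S : Finset ι}
    (hΛ : ∀ i ∈ S, Pi.single i (q : R) ∈ Λ) (hJ : ∀ i ∈ S, ∀ x ∈ J i, x + q ∈ J i)
    (hfin : ∀ r, (truncatedSlice Λ J q ∅ r).Finite)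
    (hempty : ∀ r, S.card * q ≤ r → truncatedSlice Λ J q S r = ∅) :
    IsQuasiPolynomial q fun r => ((truncatedSlice Λ J q ∅ r).ncard : ℚ) := by
  refine isQuasiPolynomial_of_fwdDiff_iter_eq_zero hq (k := S.card) (funext fun r => ?_)
  rw [fwdDiff_iter_ncard_truncatedSlice hΛ hJ hfin, hempty _ (Nat.le_add_left _ r)]
  simp

end TruncatedSlice

section PullingTriangulation

theorem exists_toLex_le_of_isCompact {ι α : Type*} [Finite ι] [LinearOrder ι] [LinearOrder α]
    [TopologicalSpace α] [OrderClosedTopology α] {K : Set (ι → α)} (hK : IsCompact K)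
    (hne : K.Nonempty) : ∃ x ∈ K, ∀ y ∈ K, toLex y ≤ toLex x := by
  classical
  have := Fintype.ofFinite ι
  suffices h : ∀ s : Finset ι, ∀ K : Set (ι → α), IsCompact K → K.Nonempty → ∃ x ∈ K, ∀ y ∈ K,
      (∀ i ∈ s, y i = x i) ∨ ∃ i ∈ s, (∀ j ∈ s, j < i → y j = x j) ∧ y i < x i by
    obtain ⟨x, hx, hmax⟩ := h Finset.univ K hK hne
    refine ⟨x, hx, fun y hy => (hmax y hy).elim (fun heq => ?_) fun ⟨i, _, heq, hlt⟩ => ?_⟩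
    · exact (congrArg toLex (funext fun i => heq i (Finset.mem_univ i))).le
    · exact le_of_lt ⟨i, fun j hj => heq j (Finset.mem_univ j) hj, hlt⟩
  intro s
  induction s using Finset.induction_on_min with
  | empty => exact fun K _ ⟨x, hx⟩ => ⟨x, hx, by simp⟩
  | insert a s ha ih =>
    intro K hK hne
    obtain ⟨b, hb, hbmax⟩ := hK.exists_isMaxOn hne (continuous_apply a).continuousOn
    obtain ⟨x, ⟨hxK, hxa⟩, hmax⟩ := ih (K ∩ {x | x a = b a})
      (hK.inter_right (isClosed_eq (continuous_apply a) continuous_const)) ⟨b, hb, rfl⟩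
    refine ⟨x, hxK, fun y hy => ?_⟩
    rcases (hbmax hy).lt_or_eq with hlt | heq
    · refine .inr ⟨a, Finset.mem_insert_self a s, fun j hj hja => ?_, hlt.trans_eq hxa.symm⟩
      obtain rfl | hj := Finset.mem_insert.mp hj
      exacts [absurd hja (lt_irrefl _), absurd hja (ha j hj).asymm]
    · have hya : y a = x a := heq.trans hxa.symm
      refine (hmax y ⟨hy, heq⟩).imp (fun h => ?_) fun ⟨i, hi, h, hlt⟩ => ?_
      · exact (Finset.forall_mem_insert _ _ _).mpr ⟨hya, h⟩
      · exact ⟨i, Finset.mem_insert_of_mem hi,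
          (Finset.forall_mem_insert _ _ _).mpr ⟨fun _ => hya, h⟩, hlt⟩

theorem exists_pos_add_smul_nonneg {𝕜 ι : Type*} [Field 𝕜] [LinearOrder 𝕜]
    [IsStrictOrderedRing 𝕜] [Finite ι] {l ν : ι → 𝕜} (hl : 0 ≤ l)
    (hν : ∀ i, l i = 0 → 0 ≤ ν i) : ∃ ε : 𝕜, 0 < ε ∧ 0 ≤ l + ε • ν := by
  obtain ⟨M, hM⟩ := Finite.exists_le fun i => -ν i / l i
  have hpos : 0 < max M 1 := zero_lt_one.trans_le (le_max_right M 1)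
  have hbound (i : ι) : -ν i ≤ max M 1 * l i := by
    obtain hi | hi := (hl i).eq_or_lt
    · rw [← hi, Pi.zero_apply, mul_zero]
      exact neg_nonpos.mpr (hν i hi.symm)
    · exact (div_le_iff₀ hi).mp ((hM i).trans (le_max_left M 1))
  refine ⟨(max M 1)⁻¹, inv_pos.mpr hpos, fun i => ?_⟩
  have h : (max M 1)⁻¹ * -ν i ≤ l i := (inv_mul_le_iff₀ hpos).mpr (hbound i)
  simpa [mul_neg, neg_le_iff_add_nonneg] using h

section LinearOrderedField

variable {𝕜 ι F : Type*} [Field 𝕜] [LinearOrder 𝕜] [LinearOrder ι] [AddCommGroup F] [Module 𝕜 F]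

/-- `T` spans a face of the pulling triangulation of the cone generated by the images under `A` of
the standard basis vectors, pulled in the order of `ι`. A linear dependence `ν` that can be added to
a nonnegative vector with support `T` and increases it lexicographically shows that this vector is
not the largest in its fibre; `T` is a face if there is no such `ν`. -/
def IsPullingFace (A : (ι → 𝕜) →ₗ[𝕜] F) (T : Set ι) : Prop :=
  ∀ ν, A ν = 0 → 0 < toLex ν → ∃ i ∉ T, ν i < 0

/-- The nonnegative coefficient vectors supported on a face of the pulling triangulation. -/
def pullingCoeffs (A : (ι → 𝕜) →ₗ[𝕜] F) : Set (ι → 𝕜) :=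
  {l | 0 ≤ l ∧ IsPullingFace A (Function.support l)}

variable {A : (ι → 𝕜) →ₗ[𝕜] F}

theorem IsPullingFace.mono {S T : Set ι} (hT : IsPullingFace A T) (h : S ⊆ T) :
    IsPullingFace A S :=
  fun ν hν hpos => (hT ν hν hpos).imp fun _ hi => ⟨fun hS => hi.1 (h hS), hi.2⟩

theorem isPullingFace_insert_bot [OrderBot ι] {T : Set ι} :
    IsPullingFace A (insert ⊥ T) ↔ IsPullingFace A T := by
  refine ⟨fun h => h.mono (subset_insert _ _), fun hT ν hν hpos => ?_⟩
  obtain ⟨i, hiT, hi⟩ := hT ν hν hpos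
  refine ⟨i, fun h => ?_, hi⟩
  obtain rfl | h := h
  · exact hi.not_ge (Pi.apply_le_of_toLex (x := (0 : ι → 𝕜)) hpos.le (by simp))
  · exact hiT h

variable [IsStrictOrderedRing 𝕜]

theorem injOn_pullingCoeffs [Finite ι] : InjOn A (pullingCoeffs A) := by
  intro l hl μ hμ heq
  by_contra hne
  wlog hlt : toLex μ < toLex l generalizing l μ
  · exact this hμ hl heq.symm (Ne.symm hne)
      ((lt_or_gt_of_ne (toLex.injective.ne hne)).resolve_right hlt)
  obtain ⟨i, hi, hneg⟩ := hμ.2 (l - μ) (by rw [map_sub, heq, sub_self]) (sub_pos.mpr hlt)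
  rw [Function.notMem_support] at hi
  exact hneg.not_ge (by simpa [hi] using hl.1 i)

theorem isPullingFace_support_of_toLex_le [Finite ι] {l : ι → 𝕜} (hl : 0 ≤ l)
    (hmax : ∀ μ, 0 ≤ μ → A μ = A l → toLex μ ≤ toLex l) :
    IsPullingFace A (Function.support l) := by
  intro ν hν hpos
  by_contra! hnonneg
  obtain ⟨ε, hε, hadd⟩ := exists_pos_add_smul_nonneg hl fun i hi =>
    hnonneg i (Function.notMem_support.mpr hi)
  refine (hmax (l + ε • ν) hadd (by rw [map_add, map_smul, hν, smul_zero, add_zero])).not_gt ?_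
  obtain ⟨k, hk, hkpos⟩ := hpos
  have hzero (j : ι) (hj : j < k) : ν j = 0 := (hk j hj).symm
  exact ⟨k, fun j hj => by simp [hzero j hj], by simpa using mul_pos hε hkpos⟩

end LinearOrderedField

variable {ι F : Type*} [Fintype ι] [AddCommGroup F] [Module ℝ F] {A : (ι → ℝ) →ₗ[ℝ] F}

theorem isCompact_nonneg_fiber (hA : ∀ ν, A ν = 0 → ∑ i, ν i = 0) (μ : ι → ℝ) :
    IsCompact {l | 0 ≤ l ∧ A l = A μ} := by
  have hker : {l | A l = A μ} = (· - μ) ⁻¹' (LinearMap.ker A : Set (ι → ℝ)) := by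
    ext l
    simp [sub_eq_zero]
  have hclosed : IsClosed {l | A l = A μ} :=
    hker ▸ (Submodule.closed_of_finiteDimensional _).preimage (continuous_sub_right μ)
  refine (isCompact_Icc (a := 0) (b := fun _ => ∑ i, μ i)).of_isClosed_subset
    (isClosed_Ici.inter hclosed) ?_
  rintro l ⟨hl, heq⟩
  have hsum : ∑ i, l i = ∑ i, μ i := by
    simpa [sub_eq_zero] using hA (l - μ) (by rw [map_sub, heq, sub_self])
  exact ⟨hl, fun i => hsum ▸ Finset.single_le_sum (fun j _ => hl j) (Finset.mem_univ i)⟩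

theorem exists_mem_pullingCoeffs [LinearOrder ι] (hA : ∀ ν, A ν = 0 → ∑ i, ν i = 0) {μ : ι → ℝ}
    (hμ : 0 ≤ μ) : ∃ l ∈ pullingCoeffs A, A l = A μ := by
  obtain ⟨l, ⟨hl, heq⟩, hmax⟩ :=
    exists_toLex_le_of_isCompact (isCompact_nonneg_fiber hA μ) ⟨μ, hμ, rfl⟩
  exact ⟨l, ⟨hl, isPullingFace_support_of_toLex_le hl fun ν hν h => hmax ν ⟨hν, h.trans heq⟩⟩, heq⟩

end PullingTriangulation

section HalfOpenCell

variable {𝕜 ι : Type*} [Bot ι] [Ring 𝕜] [LinearOrder 𝕜]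

open scoped Classical in
/-- The half-open cone `∏ i, halfOpenCell W i` spanned by the unit vectors of `W`: the coordinates
in `W` are positive, except that the one at `⊥` may vanish, and those outside `W` are zero. -/
noncomputable def halfOpenCell (W : Set ι) (i : ι) : Set 𝕜 :=
  if i ∈ W then if i = ⊥ then Ici 0 else Ioi 0 else {0}

theorem forall_mem_halfOpenCell_iff {W : Set ι} (hW : ⊥ ∈ W) {l : ι → 𝕜} :
    (∀ i, l i ∈ halfOpenCell W i) ↔ 0 ≤ l ∧ insert ⊥ (Function.support l) = W := by
  have hcell (i : ι) : l i ∈ halfOpenCell W i ↔ 0 ≤ l i ∧ ((i = ⊥ ∨ l i ≠ 0) ↔ i ∈ W) := by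
    by_cases hi : i ∈ W <;> by_cases hbot : i = ⊥
    · simp [halfOpenCell, hbot, hW]
    · simp [halfOpenCell, hi, hbot, lt_iff_le_and_ne, eq_comm]
    · exact absurd (hbot ▸ hW) hi
    · simpa [halfOpenCell, hi, hbot] using fun h : l i = 0 => h.ge
  simp only [hcell, forall_and, Pi.le_def, Set.ext_iff, mem_insert_iff, Function.mem_support,
    Pi.zero_apply]

variable [IsStrictOrderedRing 𝕜]

theorem add_natCast_mem_halfOpenCell {W : Set ι} {i : ι} (hi : i ∈ W) (q : ℕ) {x : 𝕜}
    (hx : x ∈ halfOpenCell W i) : x + q ∈ halfOpenCell W i := by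
  obtain rfl | hbot := eq_or_ne i ⊥
  · have hx : 0 ≤ x := by simpa [halfOpenCell, hi] using hx
    simpa [halfOpenCell, hi] using add_nonneg hx q.cast_nonneg
  · have hx : 0 < x := by simpa [halfOpenCell, hi, hbot] using hx
    simpa [halfOpenCell, hi, hbot] using add_pos_of_pos_of_nonneg hx q.cast_nonneg

theorem truncatedSlice_halfOpenCell_eq_empty [Fintype ι] {W : Finset ι} (hW : ⊥ ∈ W)
    {Λ : AddSubgroup (ι → 𝕜)} {q r : ℕ} (hr : W.card * q ≤ r) :
    truncatedSlice Λ (halfOpenCell (W : Set ι)) q W r = ∅ := by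
  refine eq_empty_of_forall_notMem fun l ⟨_, hsum, hcell, htrunc⟩ => ?_
  have hzero (i : ι) (hi : i ∉ W) : l i = 0 := by simpa [halfOpenCell, hi] using hcell i
  have hbot : l ⊥ < q := by simpa [halfOpenCell, hW] using htrunc ⊥ hW
  have hle (i : ι) (hi : i ∈ W) : l i ≤ q := by
    obtain rfl | hne := eq_or_ne i ⊥
    · exact hbot.le
    · simpa [halfOpenCell, hi, hne] using htrunc i hi
  have hlt : ∑ i, l i < W.card * q := by
    calc ∑ i, l i = ∑ i ∈ W, l i :=
          (Finset.sum_subset W.subset_univ fun i _ hi => hzero i hi).symm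
      _ < ∑ _i ∈ W, (q : 𝕜) := Finset.sum_lt_sum hle ⟨⊥, hW, hbot⟩
      _ = W.card * q := by rw [Finset.sum_const, nsmul_eq_mul]
  exact hlt.not_ge (hsum ▸ mod_cast hr)

end HalfOpenCell

section PullingSlice

theorem ncard_eq_sum_ncard_fiber {α κ : Type*} [Fintype κ] {s : Set α} (hs : s.Finite)
    (f : α → κ) : s.ncard = ∑ k, (s ∩ f ⁻¹' {k}).ncard := by
  rw [← finsum_eq_sum_of_fintype, ← ncard_iUnion_of_finite fun k => hs.subset inter_subset_left,
    ← inter_iUnion, ← preimage_iUnion, iUnion_of_singleton, preimage_univ, inter_univ]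
  exact fun j k hjk => (((disjoint_singleton.mpr hjk).preimage f).inter_left' s).inter_right' s

variable {𝕜 ι F : Type*} [Field 𝕜] [LinearOrder 𝕜] [Fintype ι] [LinearOrder ι] [AddCommGroup F]
  [Module 𝕜 F]

/-- The points of `Λ` with coordinate sum `r` that lie on a face of the pulling triangulation. -/
def pullingSlice (A : (ι → 𝕜) →ₗ[𝕜] F) (Λ : AddSubgroup (ι → 𝕜)) (r : ℕ) : Set (ι → 𝕜) :=
  {l | l ∈ pullingCoeffs A ∧ l ∈ Λ ∧ ∑ i, l i = r}

variable [OrderBot ι] {A : (ι → 𝕜) →ₗ[𝕜] F} {Λ : AddSubgroup (ι → 𝕜)} {q : ℕ}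

theorem pullingSlice_inter_eq_truncatedSlice {W : Set ι} (hbot : ⊥ ∈ W) (hW : IsPullingFace A W)
    (r : ℕ) : pullingSlice A Λ r ∩ {l | insert ⊥ (Function.support l) = W} =
      truncatedSlice Λ (halfOpenCell W) q ∅ r := by
  ext l
  have hface (h : insert ⊥ (Function.support l) = W) : IsPullingFace A (Function.support l) :=
    isPullingFace_insert_bot.mp (h ▸ hW)
  simp only [pullingSlice, pullingCoeffs, truncatedSlice, mem_inter_iff, mem_ofPred_eq,
    forall_mem_halfOpenCell_iff hbot, Finset.notMem_empty, IsEmpty.forall_iff, implies_true]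
  tauto

theorem pullingSlice_inter_eq_empty {W : Set ι} (hW : ¬(⊥ ∈ W ∧ IsPullingFace A W)) (r : ℕ) :
    pullingSlice A Λ r ∩ {l | insert ⊥ (Function.support l) = W} = ∅ := by
  refine eq_empty_of_forall_notMem ?_
  rintro l ⟨⟨⟨-, hface⟩, -⟩, rfl⟩
  exact hW ⟨mem_insert _ _, isPullingFace_insert_bot.mpr hface⟩

theorem isQuasiPolynomial_ncard_pullingSlice [IsStrictOrderedRing 𝕜] (hq : 0 < q)
    (hΛ : ∀ i, Pi.single i (q : 𝕜) ∈ Λ) (hfin : ∀ r, (pullingSlice A Λ r).Finite) :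
    IsQuasiPolynomial q fun r => ((pullingSlice A Λ r).ncard : ℚ) := by
  classical
  simp only [ncard_eq_sum_ncard_fiber (hfin _) fun l => insert ⊥ (Function.support l),
    Nat.cast_sum]
  refine IsQuasiPolynomial.sum fun W _ => ?_
  change IsQuasiPolynomial q fun r =>
    ((pullingSlice A Λ r ∩ {l | insert ⊥ (Function.support l) = W}).ncard : ℚ)
  by_cases hW : ⊥ ∈ W ∧ IsPullingFace A W
  · have hslice (r : ℕ) := pullingSlice_inter_eq_truncatedSlice (Λ := Λ) (q := q) hW.1 hW.2 r
    simp only [hslice]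
    refine isQuasiPolynomial_ncard_truncatedSlice hq (S := W.toFinset) (fun i _ => hΛ i)
      (fun i hi x => add_natCast_mem_halfOpenCell (mem_toFinset.mp hi) q)
      (fun r => hslice r ▸ (hfin r).subset inter_subset_left) fun r hr => ?_
    simpa using truncatedSlice_halfOpenCell_eq_empty (mem_toFinset.mpr hW.1) hr
  · simp only [pullingSlice_inter_eq_empty hW, ncard_empty, Nat.cast_zero]
    exact isQuasiPolynomial_zero q

end PullingSlice

section Homogenization

variable {R ι E : Type*} [CommSemiring R] [Fintype ι] [AddCommMonoid E] [Module R E]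

/-- The linear map taking the `i`-th unit vector to `(1, v i)`, whose image of the nonnegative
orthant is the cone over the polytope `convexHull R (range v)`. -/
noncomputable def homogenization (v : ι → E) : (ι → R) →ₗ[R] R × E :=
  Fintype.linearCombination R fun i => ((1 : R), v i)

theorem homogenization_apply (v : ι → E) (l : ι → R) :
    homogenization v l = (∑ i, l i, Fintype.linearCombination R v l) := by
  simp [homogenization, Fintype.linearCombination_apply, Prod.ext_iff, Prod.fst_sum, Prod.snd_sum]

end Homogenization

section ConvexHull

variable {𝕜 ι E : Type*} [Field 𝕜] [LinearOrder 𝕜] [IsStrictOrderedRing 𝕜] [Fintype ι]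
  [AddCommGroup E] [Module 𝕜 E] {v : ι → E}

theorem convexHull_range_eq_image_stdSimplex :
    convexHull 𝕜 (range v) = Fintype.linearCombination 𝕜 v '' stdSimplex 𝕜 ι := by
  classical
  rw [← convexHull_rangle_single_eq_stdSimplex, LinearMap.image_convexHull, ← range_comp]
  congr 2
  ext i
  simp

theorem mem_smul_convexHull_range_iff [Nonempty ι] {r : 𝕜} (hr : 0 ≤ r) {x : E} :
    x ∈ r • convexHull 𝕜 (range v) ↔
      ∃ l : ι → 𝕜, 0 ≤ l ∧ ∑ i, l i = r ∧ Fintype.linearCombination 𝕜 v l = x := by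
  rw [convexHull_range_eq_image_stdSimplex]
  constructor
  · rintro ⟨_, ⟨l, ⟨hl, hsum⟩, rfl⟩, rfl⟩
    exact ⟨r • l, smul_nonneg hr hl, by simp [← Finset.mul_sum, hsum], map_smul _ _ _⟩
  · rintro ⟨l, hl, hsum, rfl⟩
    obtain rfl | hpos := hr.eq_or_lt
    · have hl0 : l = 0 := by
        ext i
        exact (Finset.sum_eq_zero_iff_of_nonneg fun i _ => hl i).mp hsum i (Finset.mem_univ i)
      have hne : (Fintype.linearCombination 𝕜 v '' stdSimplex 𝕜 ι).Nonempty := by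
        rw [← convexHull_range_eq_image_stdSimplex]
        exact (range_nonempty v).convexHull
      rw [zero_smul_set hne, hl0, map_zero, Set.mem_zero]
    · rw [mem_smul_set_iff_inv_smul_mem₀ hpos.ne', ← map_smul]
      refine mem_image_of_mem _ ⟨smul_nonneg (inv_nonneg.mpr hr) hl, ?_⟩
      simp [← Finset.mul_sum, hsum, hpos.ne']

end ConvexHull

theorem bijOn_pullingSlice_homogenization {ι E : Type*} [Fintype ι] [Nonempty ι] [LinearOrder ι]
    [AddCommGroup E] [Module ℝ E] {v : ι → E} (L : AddSubgroup E) (r : ℕ) :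
    BijOn (Fintype.linearCombination ℝ v)
      (pullingSlice (homogenization v) (L.comap (Fintype.linearCombination ℝ v).toAddMonoidHom) r)
      ((r : ℝ) • convexHull ℝ (range v) ∩ L) := by
  refine ⟨fun l ⟨⟨hl, _⟩, hL, hsum⟩ => ?_, fun l ⟨hl, _, hsum⟩ μ ⟨hμ, _, hsum'⟩ heq => ?_, ?_⟩
  · exact ⟨(mem_smul_convexHull_range_iff r.cast_nonneg).mpr ⟨l, hl, hsum, rfl⟩, hL⟩
  · exact injOn_pullingCoeffs hl hμ (by simp only [homogenization_apply, hsum, hsum', heq])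
  · rintro x ⟨hx, hxL⟩
    obtain ⟨μ, hμ, hsum, rfl⟩ := (mem_smul_convexHull_range_iff r.cast_nonneg).mp hx
    obtain ⟨l, hl, heq⟩ := exists_mem_pullingCoeffs (A := homogenization v)
      (fun ν hν => congrArg Prod.fst ((homogenization_apply v ν).symm.trans hν)) hμ
    simp only [homogenization_apply, Prod.mk.injEq] at heq
    exact ⟨l, ⟨hl, (mem_of_eq_of_mem heq.2 hxL :), heq.1.trans hsum⟩, heq.2⟩

theorem isQuasiPolynomial_ncard_smul_convexHull_range_inter {ι E : Type*} [Finite ι]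
    [LinearOrder ι] [OrderBot ι] [AddCommGroup E] [Module ℝ E] {v : ι → E} {L : AddSubgroup E}
    {q : ℕ} (hq : 0 < q) (hL : ∀ i, (q : ℝ) • v i ∈ L)
    (hfin : ∀ r : ℕ, ((r : ℝ) • convexHull ℝ (range v) ∩ L).Finite) :
    IsQuasiPolynomial q fun r : ℕ => (((r : ℝ) • convexHull ℝ (range v) ∩ L).ncard : ℚ) := by
  have := Fintype.ofFinite ι
  simp only [← (bijOn_pullingSlice_homogenization L _).ncard_eq]
  refine isQuasiPolynomial_ncard_pullingSlice hq (fun i => ?_) fun r =>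
    (bijOn_pullingSlice_homogenization L r).finite_iff_finite.mpr (hfin r)
  simpa using hL i

theorem isQuasiPolynomial_ncard_smul_convexHull_inter {E : Type*} [AddCommGroup E] [Module ℝ E]
    {s : Set E} (hs : s.Finite) {L : AddSubgroup E} {q : ℕ} (hq : 0 < q)
    (hL : ∀ x ∈ s, (q : ℝ) • x ∈ L)
    (hfin : ∀ r : ℕ, ((r : ℝ) • convexHull ℝ s ∩ L).Finite) :
    IsQuasiPolynomial q fun r : ℕ => (((r : ℝ) • convexHull ℝ s ∩ L).ncard : ℚ) := by
  obtain ⟨n, v, -, rfl⟩ := hs.fin_param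
  cases n with
  | zero => simpa using isQuasiPolynomial_zero (R := ℚ) q
  | succ n =>
    exact isQuasiPolynomial_ncard_smul_convexHull_range_inter hq (fun i => hL _ ⟨i, rfl⟩) hfin

section IntegerLattice

variable {κ : Type*}

/-- The points of `κ → ℝ` with integer coordinates. -/
def integerLattice (κ : Type*) : AddSubgroup (κ → ℝ) :=
  ((Int.castAddHom ℝ).compLeft κ).range

theorem mem_integerLattice {x : κ → ℝ} : x ∈ integerLattice κ ↔ ∀ i, ∃ z : ℤ, (z : ℝ) = x i := by
  refine ⟨?_, fun h => ?_⟩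
  · rintro ⟨z, rfl⟩ i
    exact ⟨z i, rfl⟩
  · choose z hz using h
    exact ⟨z, funext hz⟩

theorem ncard_intCast_mem_eq_ncard_inter_integerLattice (S : Set (κ → ℝ)) :
    {x : κ → ℤ | (fun i => (x i : ℝ)) ∈ S}.ncard = (S ∩ integerLattice κ).ncard := by
  have hinj : Function.Injective fun (x : κ → ℤ) i => (x i : ℝ) := Int.cast_injective.comp_left
  rw [← ncard_image_of_injective _ hinj]
  congr 1
  exact image_preimage_eq_inter_range

theorem coe_integerLattice_eq_coe_span [Finite κ] :
    (integerLattice κ : Set (κ → ℝ)) = Submodule.span ℤ (range (Pi.basisFun ℝ κ)) := by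
  ext x
  simp [mem_integerLattice, Module.Basis.mem_span_iff_repr_mem]

theorem finite_inter_integerLattice [Finite κ] {S : Set (κ → ℝ)} (hS : Bornology.IsBounded S) :
    (S ∩ integerLattice κ).Finite := by
  have := Fintype.ofFinite κ
  rw [coe_integerLattice_eq_coe_span]
  exact ZSpan.setFinite_inter (Pi.basisFun ℝ κ) hS

theorem tendsto_ncard_smul_inter_integerLattice_div_pow [Fintype κ] {S : Set (κ → ℝ)}
    (hS : Bornology.IsBounded S) (hmeas : MeasurableSet S)
    (hfrontier : volume (frontier S) = 0) :
    Tendsto (fun r : ℕ => (((r : ℝ) • S ∩ integerLattice κ).ncard : ℝ) / (r : ℝ) ^ Fintype.card κ)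
      atTop (𝓝 (volume.real S)) := by
  refine (tendsto_card_div_pow_atTop_volume S hS hmeas hfrontier).congr' ?_
  filter_upwards [eventually_ne_atTop 0] with r hr
  have hr' : (r : ℝ) ≠ 0 := Nat.cast_ne_zero.mpr hr
  have hsmul : (r : ℝ) • (S ∩ (r : ℝ)⁻¹ • integerLattice κ) = (r : ℝ) • S ∩ integerLattice κ := by
    rw [smul_set_inter₀ hr', smul_inv_smul₀ hr']
  rw [← coe_integerLattice_eq_coe_span, Nat.card_coe_set_eq, ← hsmul,
    ← ncard_image_of_injective _ (smul_right_injective (κ → ℝ) hr'), image_smul]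

theorem exists_pos_forall_smul_mem_integerLattice [Finite κ] {V : Set (κ → ℚ)} (hV : V.Finite) :
    ∃ q : ℕ, 0 < q ∧ ∀ u ∈ V, (q : ℝ) • (fun i => (u i : ℝ)) ∈ integerLattice κ := by
  have := hV.to_subtype
  obtain ⟨⟨b, hb⟩, hint⟩ := IsLocalization.exist_integer_multiples_of_finite (nonZeroDivisors ℤ)
    fun j : V × κ => j.1.1 j.2
  have hmem (u : κ → ℚ) (hu : u ∈ V) : (b : ℝ) • (fun i => (u i : ℝ)) ∈ integerLattice κ := by
    refine mem_integerLattice.mpr fun i => ?_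
    obtain ⟨z, hz⟩ := hint (⟨u, hu⟩, i)
    exact ⟨z, by simpa using congrArg (Rat.cast : ℚ → ℝ) hz⟩
  refine ⟨b.natAbs, Int.natAbs_pos.mpr (nonZeroDivisors.ne_zero hb), fun u hu => ?_⟩
  rw [Nat.cast_natAbs, Int.cast_abs]
  rcases abs_choice (b : ℝ) with h | h <;> rw [h]
  · exact hmem u hu
  · rw [neg_smul]
    exact neg_mem (hmem u hu)

end IntegerLattice

/-- Ehrhart's theorem, part 1: for a rational polytope `P ⊆ ℝ^d` of dimension `d`
(the convex hull of finitely many rational points, affinely spanning `ℝ^d`), the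
lattice-point counting function `L(P, r) = Card(rP ∩ ℤ^d)` is a quasi-polynomial of
degree `d` whose constituents all have leading coefficient equal to the Euclidean
volume of `P`. -/
theorem ehrhart_quasipolynomial
    (d : ℕ) (hd : 0 < d) (P : Set (Fin d → ℝ))
    (hP : ∃ V : Finset (Fin d → ℚ),
      P = convexHull ℝ ((fun v : Fin d → ℚ => fun i => ((v i : ℝ))) '' ↑V))
    (hdim : affineSpan ℝ P = ⊤) :
    ∃ (q : ℕ) (hq : 0 < q) (g : Fin q → Polynomial ℚ),
      (∀ i : Fin q, (g i).natDegree = d ∧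
        ((g i).coeff d : ℝ) = (MeasureTheory.volume P).toReal) ∧
      ∀ r : ℕ,
        (Set.ncard {x : Fin d → ℤ | (fun i => (x i : ℝ)) ∈ (r : ℝ) • P} : ℚ)
          = (g ⟨r % q, Nat.mod_lt r hq⟩).eval (r : ℚ) := by
  obtain ⟨V, rfl⟩ := hP
  let s : Set (Fin d → ℝ) := (fun v : Fin d → ℚ => fun i => (v i : ℝ)) '' (V : Set (Fin d → ℚ))
  have hs : s.Finite := V.finite_toSet.image _
  have hconv : Convex ℝ (convexHull ℝ s) := convex_convexHull ℝ s
  have hcomp : IsCompact (convexHull ℝ s) := hs.isCompact_convexHull ℝ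
  have hvol : (volume (convexHull ℝ s)).toReal ≠ 0 := by
    have hint := hconv.interior_nonempty_iff_affineSpan_eq_top.mpr hdim
    exact (ENNReal.toReal_pos (Measure.measure_pos_of_nonempty_interior _ hint).ne'
      hcomp.measure_lt_top.ne).ne'
  have hlim := tendsto_ncard_smul_inter_integerLattice_div_pow hcomp.isBounded hcomp.measurableSet
    (hconv.addHaar_frontier _)
  obtain ⟨q, hq, hqV⟩ := exists_pos_forall_smul_mem_integerLattice V.finite_toSet
  have hcount := isQuasiPolynomial_ncard_smul_convexHull_inter hs hq (forall_mem_image.mpr hqV)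
    fun r => finite_inter_integerLattice (hcomp.isBounded.smul₀ (r : ℝ))
  choose g hg using hcount
  refine ⟨q, hq, fun i => g i, fun i => ?_, fun r => ?_⟩
  · exact natDegree_eq_and_coeff_eq_of_eval_eq_of_modEq hq (hg i) hvol
      (by simpa [measureReal_def] using hlim)
  · rw [ncard_intCast_mem_eq_ncard_inter_integerLattice]
    exact hg (r % q) r (Nat.mod_modEq r q).symm
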